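/- arXiv:2602.16879 — 5 statements merged into one kernel-verified Lean document; each statement's English description precedes it below -/
import Mathlib

section
/- Every two-sided restriction semigroupoid is a two-sided Ehresmann semigroupoid, and on a two-sided restriction semigroupoid (S,+,*) the two partial orders coincide: for all s,t ∈ S, [s⁺t is defined and s⁺t = s] if and only if [ts* is defined and ts* = s]. -/
/-!
Only the Ehresmann axioms `(st)⁺ = (st⁺)⁺` and `(st)* = (s*t)*` need an argument. Since
`st⁺ = (st)⁺s`, the first amounts to
`((st)⁺s)⁺ = (st)⁺s⁺ = s⁺(st)⁺ = (s⁺st)⁺ = (st)⁺`, and the second is dual.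

The orders coincide because projections are fixed by both unary operations: if `s⁺t = s`, the
identity `u*t = t(ut)*` at `u = s⁺` reads `s = ts*`, and conversely `tu⁺ = (tu)⁺t` at `u = s*`
reads `s = s⁺t` when `ts* = s`.
-/

universe u

/-- A semigroupoid (Exel): a partially defined binary operation, associative in Exel's sense.
`defined s t` means the product `s ⋆ t` is defined; `mul` is a total function whose value is
only meaningful on defined pairs. -/
structure Semigroupoid (S : Type u) where
  defined : S → S → Prop
  mul : S → S → S
  assoc₁ : ∀ s t r, defined s t → defined t r →
    defined (mul s t) r ∧ defined s (mul t r) ∧ mul (mul s t) r = mul s (mul t r)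
  assoc₂ : ∀ s t r, defined s t → defined (mul s t) r →
    defined t r ∧ defined s (mul t r) ∧ mul (mul s t) r = mul s (mul t r)
  assoc₃ : ∀ s t r, defined t r → defined s (mul t r) →
    defined s t ∧ defined (mul s t) r ∧ mul (mul s t) r = mul s (mul t r)

/-- A left Ehresmann semigroupoid. -/
structure LeftEhresmannSgpd (S : Type u) extends Semigroupoid S where
  plus : S → S
  le1 : ∀ s, defined (plus s) s ∧ mul (plus s) s = s
  le2 : ∀ s t, defined (plus s) (plus t) →
    defined (plus t) (plus s) ∧ mul (plus s) (plus t) = mul (plus t) (plus s)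
  le3 : ∀ s t, defined (plus s) (plus t) → mul (plus s) (plus t) = plus (mul (plus s) t)
  le4 : ∀ s t, defined s t → plus (mul s t) = plus (mul s (plus t))

/-- The set of projections `S⁺ = {s⁺ : s ∈ S}`. -/
def LeftEhresmannSgpd.projections {S : Type u} (E : LeftEhresmannSgpd S) : Set S :=
  {e | ∃ s, e = E.plus s}

/-- The relation `s ≤_l t` : `s⁺t` is defined and `s⁺t = s`. -/
def LeftEhresmannSgpd.lel {S : Type u} (E : LeftEhresmannSgpd S) (s t : S) : Prop :=
  E.defined (E.plus s) t ∧ E.mul (E.plus s) t = s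

/-- A two-sided Ehresmann semigroupoid. -/
structure EhresmannSgpd (S : Type u) extends Semigroupoid S where
  plus : S → S
  star : S → S
  le1 : ∀ s, defined (plus s) s ∧ mul (plus s) s = s
  le2 : ∀ s t, defined (plus s) (plus t) →
    defined (plus t) (plus s) ∧ mul (plus s) (plus t) = mul (plus t) (plus s)
  le3 : ∀ s t, defined (plus s) (plus t) → mul (plus s) (plus t) = plus (mul (plus s) t)
  le4 : ∀ s t, defined s t → plus (mul s t) = plus (mul s (plus t))
  re1 : ∀ s, defined s (star s) ∧ mul s (star s) = s
  re2 : ∀ s t, defined (star s) (star t) →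
    defined (star t) (star s) ∧ mul (star s) (star t) = mul (star t) (star s)
  re3 : ∀ s t, defined (star s) (star t) → mul (star s) (star t) = star (mul s (star t))
  re4 : ∀ s t, defined s t → star (mul s t) = star (mul (star s) t)
  plus_star : ∀ s, star (plus s) = plus s
  star_plus : ∀ s, plus (star s) = star s

/-- The set of projections `U = S⁺ = S*`. -/
def EhresmannSgpd.projections {S : Type u} (E : EhresmannSgpd S) : Set S :=
  {e | ∃ s, e = E.plus s}

/-- `s ≤_l t` : `s⁺t` is defined and `s⁺t = s`. -/
def EhresmannSgpd.lel {S : Type u} (E : EhresmannSgpd S) (s t : S) : Prop :=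
  E.defined (E.plus s) t ∧ E.mul (E.plus s) t = s

/-- `s ≤_r t` : `ts*` is defined and `ts* = s`. -/
def EhresmannSgpd.ler {S : Type u} (E : EhresmannSgpd S) (s t : S) : Prop :=
  E.defined t (E.star s) ∧ E.mul t (E.star s) = s

/-- A two-sided restriction semigroupoid. -/
structure RestrictionSgpd (S : Type u) extends Semigroupoid S where
  plus : S → S
  star : S → S
  lr1 : ∀ s, defined (plus s) s ∧ mul (plus s) s = s
  lr2 : ∀ s t, defined (plus s) (plus t) →
    defined (plus t) (plus s) ∧ mul (plus s) (plus t) = mul (plus t) (plus s)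
  lr3 : ∀ s t, defined (plus s) (plus t) → mul (plus s) (plus t) = plus (mul (plus s) t)
  lr4 : ∀ s t, defined s t →
    defined (plus (mul s t)) s ∧ mul s (plus t) = mul (plus (mul s t)) s
  rr1 : ∀ s, defined s (star s) ∧ mul s (star s) = s
  rr2 : ∀ s t, defined (star s) (star t) →
    defined (star t) (star s) ∧ mul (star s) (star t) = mul (star t) (star s)
  rr3 : ∀ s t, defined (star s) (star t) → mul (star s) (star t) = star (mul s (star t))
  rr4 : ∀ s t, defined s t →
    defined t (star (mul s t)) ∧ mul (star s) t = mul t (star (mul s t))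
  plus_star : ∀ s, star (plus s) = plus s
  star_plus : ∀ s, plus (star s) = star s

/-- The set of projections of a restriction semigroupoid. -/
def RestrictionSgpd.projections {S : Type u} (R : RestrictionSgpd S) : Set S :=
  {e | ∃ s, e = R.plus s}

/-- The natural partial order of a restriction semigroupoid: `s ≤ t` iff `s⁺t = s`. -/
def RestrictionSgpd.natLe {S : Type u} (R : RestrictionSgpd S) (s t : S) : Prop :=
  R.defined (R.plus s) t ∧ R.mul (R.plus s) t = s

/-- A local meet-semilattice: a commutative semigroupoid in which every element is idempotent. -/
structure LocalMeetSemilattice (S : Type u) extends Semigroupoid S where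
  idem_def : ∀ e, defined e e
  idem : ∀ e, mul e e = e
  comm_def : ∀ e f, defined e f → defined f e
  comm : ∀ e f, defined e f → mul e f = mul f e

/-- A local biordered Ehresmann category. -/
structure LBEC (C : Type u) where
  obj : Set C
  dom : C → C
  cod : C → C
  comp : C → C → C
  dom_mem : ∀ x, dom x ∈ obj
  cod_mem : ∀ x, cod x ∈ obj
  dom_comp : ∀ x y, dom x = cod y → dom (comp x y) = dom y
  cod_comp : ∀ x y, dom x = cod y → cod (comp x y) = cod x
  comp_assoc : ∀ x y z, dom x = cod y → dom y = cod z →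
    comp (comp x y) z = comp x (comp y z)
  dom_obj : ∀ e, e ∈ obj → dom e = e
  cod_obj : ∀ e, e ∈ obj → cod e = e
  comp_id : ∀ x e, e ∈ obj → dom x = e → comp x e = x
  id_comp : ∀ y e, e ∈ obj → cod y = e → comp e y = y
  lel : C → C → Prop
  ler : C → C → Prop
  lel_refl : ∀ x, lel x x
  lel_antisymm : ∀ x y, lel x y → lel y x → x = y
  lel_trans : ∀ x y z, lel x y → lel y z → lel x z
  ler_refl : ∀ x, ler x x
  ler_antisymm : ∀ x y, ler x y → ler y x → x = y
  ler_trans : ∀ x y z, ler x y → ler y z → ler x z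
  lel_dom : ∀ x y, lel x y → lel (dom x) (dom y)
  lel_cod : ∀ x y, lel x y → lel (cod x) (cod y)
  ler_dom : ∀ x y, ler x y → ler (dom x) (dom y)
  ler_cod : ∀ x y, ler x y → ler (cod x) (cod y)
  lel_comp : ∀ x y x' y', lel x y → lel x' y' → dom x = cod x' → dom y = cod y' →
    lel (comp x x') (comp y y')
  ler_comp : ∀ x y x' y', ler x y → ler x' y' → dom x = cod x' → dom y = cod y' →
    ler (comp x x') (comp y y')
  cores : C → C → C
  cores_le : ∀ e x, e ∈ obj → lel e (cod x) → lel (cores e x) x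
  cod_cores : ∀ e x, e ∈ obj → lel e (cod x) → cod (cores e x) = e
  cores_unique : ∀ e x y, e ∈ obj → lel e (cod x) → lel y x → cod y = e → y = cores e x
  res : C → C → C
  res_le : ∀ x e, e ∈ obj → ler e (dom x) → ler (res x e) x
  dom_res : ∀ x e, e ∈ obj → ler e (dom x) → dom (res x e) = e
  res_unique : ∀ x e y, e ∈ obj → ler e (dom x) → ler y x → dom y = e → y = res x e
  mdef : C → C → Prop
  meet : C → C → C
  meet_mem : ∀ e f, e ∈ obj → f ∈ obj → mdef e f → meet e f ∈ obj
  mdef_self : ∀ e, e ∈ obj → mdef e e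
  meet_self : ∀ e, e ∈ obj → meet e e = e
  mdef_comm : ∀ e f, e ∈ obj → f ∈ obj → mdef e f → mdef f e
  meet_comm : ∀ e f, e ∈ obj → f ∈ obj → mdef e f → meet e f = meet f e
  meet_assoc₁ : ∀ e f g, e ∈ obj → f ∈ obj → g ∈ obj → mdef e f → mdef f g →
    mdef (meet e f) g ∧ mdef e (meet f g) ∧ meet (meet e f) g = meet e (meet f g)
  meet_assoc₂ : ∀ e f g, e ∈ obj → f ∈ obj → g ∈ obj → mdef e f → mdef (meet e f) g →
    mdef f g ∧ mdef e (meet f g) ∧ meet (meet e f) g = meet e (meet f g)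
  meet_assoc₃ : ∀ e f g, e ∈ obj → f ∈ obj → g ∈ obj → mdef f g → mdef e (meet f g) →
    mdef e f ∧ mdef (meet e f) g ∧ meet (meet e f) g = meet e (meet f g)
  ec4l : ∀ e f, e ∈ obj → f ∈ obj → (lel e f ↔ mdef e f ∧ meet e f = e)
  ec4r : ∀ e f, e ∈ obj → f ∈ obj → (ler e f ↔ mdef e f ∧ meet e f = e)
  ec5 : ∀ x z, (∃ y, lel x y ∧ ler y z) ↔ (∃ y, ler x y ∧ lel y z)
  ec6 : ∀ x y e, e ∈ obj → lel x y → mdef (dom x) e →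
    lel (res x (meet (dom x) e)) (res y (meet (dom y) e))
  ec7 : ∀ x y e, e ∈ obj → ler x y → mdef e (cod x) →
    ler (cores (meet e (cod x)) x) (cores (meet e (cod y)) y)

/-- `x ⊗ y` is defined iff `D(x) ∧ R(y)` is defined. -/
def LBEC.pdef {C : Type u} (E : LBEC C) (x y : C) : Prop :=
  E.mdef (E.dom x) (E.cod y)

/-- The pseudo-product `x ⊗ y = (x|e) ∘ (e|y)` where `e = D(x) ∧ R(y)`. -/
def LBEC.pprod {C : Type u} (E : LBEC C) (x y : C) : C :=
  E.comp (E.res x (E.meet (E.dom x) (E.cod y))) (E.cores (E.meet (E.dom x) (E.cod y)) y)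

/-- A locally inductive category. -/
structure LInductiveCat (C : Type u) where
  obj : Set C
  dom : C → C
  cod : C → C
  comp : C → C → C
  dom_mem : ∀ x, dom x ∈ obj
  cod_mem : ∀ x, cod x ∈ obj
  dom_comp : ∀ x y, dom x = cod y → dom (comp x y) = dom y
  cod_comp : ∀ x y, dom x = cod y → cod (comp x y) = cod x
  comp_assoc : ∀ x y z, dom x = cod y → dom y = cod z →
    comp (comp x y) z = comp x (comp y z)
  dom_obj : ∀ e, e ∈ obj → dom e = e
  cod_obj : ∀ e, e ∈ obj → cod e = e
  comp_id : ∀ x e, e ∈ obj → dom x = e → comp x e = x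
  id_comp : ∀ y e, e ∈ obj → cod y = e → comp e y = y
  le : C → C → Prop
  le_refl : ∀ x, le x x
  le_antisymm : ∀ x y, le x y → le y x → x = y
  le_trans : ∀ x y z, le x y → le y z → le x z
  le_dom : ∀ x y, le x y → le (dom x) (dom y)
  le_cod : ∀ x y, le x y → le (cod x) (cod y)
  le_comp : ∀ x y x' y', le x y → le x' y' → dom x = cod x' → dom y = cod y' →
    le (comp x x') (comp y y')
  res : C → C → C
  res_le : ∀ x e, e ∈ obj → le e (dom x) → le (res x e) x
  dom_res : ∀ x e, e ∈ obj → le e (dom x) → dom (res x e) = e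
  res_unique : ∀ x e y, e ∈ obj → le e (dom x) → le y x → dom y = e → y = res x e
  cores : C → C → C
  cores_le : ∀ e x, e ∈ obj → le e (cod x) → le (cores e x) x
  cod_cores : ∀ e x, e ∈ obj → le e (cod x) → cod (cores e x) = e
  cores_unique : ∀ e x y, e ∈ obj → le e (cod x) → le y x → cod y = e → y = cores e x
  mdef : C → C → Prop
  meet : C → C → C
  meet_mem : ∀ e f, e ∈ obj → f ∈ obj → mdef e f → meet e f ∈ obj
  mdef_self : ∀ e, e ∈ obj → mdef e e
  meet_self : ∀ e, e ∈ obj → meet e e = e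
  mdef_comm : ∀ e f, e ∈ obj → f ∈ obj → mdef e f → mdef f e
  meet_comm : ∀ e f, e ∈ obj → f ∈ obj → mdef e f → meet e f = meet f e
  meet_assoc₁ : ∀ e f g, e ∈ obj → f ∈ obj → g ∈ obj → mdef e f → mdef f g →
    mdef (meet e f) g ∧ mdef e (meet f g) ∧ meet (meet e f) g = meet e (meet f g)
  meet_assoc₂ : ∀ e f g, e ∈ obj → f ∈ obj → g ∈ obj → mdef e f → mdef (meet e f) g →
    mdef f g ∧ mdef e (meet f g) ∧ meet (meet e f) g = meet e (meet f g)
  meet_assoc₃ : ∀ e f g, e ∈ obj → f ∈ obj → g ∈ obj → mdef f g → mdef e (meet f g) →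
    mdef e f ∧ mdef (meet e f) g ∧ meet (meet e f) g = meet e (meet f g)
  le_meet : ∀ e f, e ∈ obj → f ∈ obj → (le e f ↔ mdef e f ∧ meet e f = e)

/-- `Cat` is the local biordered Ehresmann category `C(S)` associated with the two-sided
Ehresmann semigroupoid `E`. -/
def IsCofS {S : Type u} (E : EhresmannSgpd S) (Cat : LBEC S) : Prop :=
  Cat.obj = E.projections ∧
  Cat.dom = E.star ∧
  Cat.cod = E.plus ∧
  (∀ s t, E.star s = E.plus t → Cat.comp s t = E.mul s t) ∧
  Cat.lel = E.lel ∧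
  Cat.ler = E.ler ∧
  (∀ e f, e ∈ E.projections → f ∈ E.projections →
    (Cat.mdef e f ↔ E.defined e f) ∧ (E.defined e f → Cat.meet e f = E.mul e f))

/-- `E` is the two-sided Ehresmann semigroupoid `S(C)` associated with the local biordered
Ehresmann category `Cat`. -/
def IsSofC {C : Type u} (Cat : LBEC C) (E : EhresmannSgpd C) : Prop :=
  (E.defined = Cat.pdef) ∧
  (∀ x y, E.defined x y → E.mul x y = Cat.pprod x y) ∧
  E.plus = Cat.cod ∧
  E.star = Cat.dom

/-- `L` is the locally inductive category `C(S)` associated with the two-sided restriction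
semigroupoid `R`. -/
def IsCofSRes {S : Type u} (R : RestrictionSgpd S) (L : LInductiveCat S) : Prop :=
  L.obj = R.projections ∧
  L.dom = R.star ∧
  L.cod = R.plus ∧
  (∀ s t, R.star s = R.plus t → L.comp s t = R.mul s t) ∧
  L.le = R.natLe ∧
  (∀ e f, e ∈ R.projections → f ∈ R.projections →
    (L.mdef e f ↔ R.defined e f) ∧ (R.defined e f → L.meet e f = R.mul e f))

/-- `t` is a pseudo-inverse of `s` in the semigroupoid `Sg`. -/
def Semigroupoid.PInv {S : Type u} (Sg : Semigroupoid S) (s t : S) : Prop :=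
  Sg.defined s t ∧ Sg.defined t s ∧ Sg.mul (Sg.mul s t) s = s ∧ Sg.mul (Sg.mul t s) t = t

/-- The restriction semigroupoid `R` is an inverse semigroupoid with `s⁺ = ss⁻¹`, `s* = s⁻¹s`. -/
def RestrictionSgpd.IsInverse {S : Type u} (R : RestrictionSgpd S) : Prop :=
  ∃ inv : S → S,
    (∀ s, R.toSemigroupoid.PInv s (inv s)) ∧
    (∀ s t, R.toSemigroupoid.PInv s t → t = inv s) ∧
    (∀ s, R.plus s = R.mul s (inv s) ∧ R.star s = R.mul (inv s) s)

/-- `y` is an inverse of `x` in the category `L`. -/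
def LInductiveCat.IsInv {C : Type u} (L : LInductiveCat C) (x y : C) : Prop :=
  L.dom y = L.cod x ∧ L.cod y = L.dom x ∧ L.comp x y = L.cod x ∧ L.comp y x = L.dom x

/-- The category `L` is a groupoid: every element has a unique inverse. -/
def LInductiveCat.IsGroupoid {C : Type u} (L : LInductiveCat C) : Prop :=
  ∀ x, ∃! y, L.IsInv x y

/-- Inversion in `L` is order-preserving (condition (ig1) of locally inductive groupoids). -/
def LInductiveCat.InvOrdPres {C : Type u} (L : LInductiveCat C) : Prop :=
  ∀ x y x' y', L.IsInv x x' → L.IsInv y y' → L.le x y → L.le x' y'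

/-- `(S0, D, R)` is a category structure on the semigroupoid `Sg`. -/
def Semigroupoid.CatStructOn {S : Type u} (Sg : Semigroupoid S) (S0 : Set S)
    (D R : S → S) : Prop :=
  (∀ s, D s ∈ S0) ∧ (∀ s, R s ∈ S0) ∧
  (∀ s t, Sg.defined s t ↔ D s = R t) ∧
  (∀ s t, Sg.defined s t → D (Sg.mul s t) = D t ∧ R (Sg.mul s t) = R s) ∧
  (∀ e, e ∈ S0 → D e = e ∧ R e = e) ∧
  (∀ s, Sg.mul s (D s) = s) ∧
  (∀ t, Sg.mul (R t) t = t)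

/-- `(U0, d, r)` is a category structure on the sub-semigroupoid of `Sg` with underlying
set `U`. -/
def Semigroupoid.CatStructOnSubset {S : Type u} (Sg : Semigroupoid S) (U : Set S)
    (U0 : Set S) (d r : S → S) : Prop :=
  U0 ⊆ U ∧
  (∀ e, e ∈ U → d e ∈ U0 ∧ r e ∈ U0) ∧
  (∀ e f, e ∈ U → f ∈ U → (Sg.defined e f ↔ d e = r f)) ∧
  (∀ e f, e ∈ U → f ∈ U → Sg.defined e f →
    d (Sg.mul e f) = d f ∧ r (Sg.mul e f) = r e) ∧
  (∀ e, e ∈ U0 → d e = e ∧ r e = e) ∧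
  (∀ e, e ∈ U → Sg.mul e (d e) = e ∧ Sg.mul (r e) e = e)

/-- A (2,1,1)-morphism between two-sided Ehresmann semigroupoids. -/
def Is211 {S : Type u} {T : Type u} (E : EhresmannSgpd S) (F : EhresmannSgpd T)
    (φ : S → T) : Prop :=
  (∀ s t, E.defined s t →
    F.defined (φ s) (φ t) ∧ φ (E.mul s t) = F.mul (φ s) (φ t)) ∧
  (∀ s, φ (E.plus s) = F.plus (φ s)) ∧
  (∀ s, φ (E.star s) = F.star (φ s))

/-- An inductive functor between local biordered Ehresmann categories. -/
def IndFunctor {C : Type u} {D : Type u} (A : LBEC C) (B : LBEC D) (φ : C → D) : Prop :=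
  (∀ x, φ (A.dom x) = B.dom (φ x)) ∧
  (∀ x, φ (A.cod x) = B.cod (φ x)) ∧
  (∀ x y, A.dom x = A.cod y → φ (A.comp x y) = B.comp (φ x) (φ y)) ∧
  (∀ x y, A.lel x y → B.lel (φ x) (φ y)) ∧
  (∀ x y, A.ler x y → B.ler (φ x) (φ y)) ∧
  (∀ e f, e ∈ A.obj → f ∈ A.obj → A.mdef e f →
    B.mdef (φ e) (φ f) ∧ φ (A.meet e f) = B.meet (φ e) (φ f))

/-- A ∨-premorphism between two-sided restriction semigroupoids. -/
def VPre {S : Type u} {T : Type u} (R1 : RestrictionSgpd S) (R2 : RestrictionSgpd T)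
    (φ : S → T) : Prop :=
  (∀ s t, R1.defined s t →
    R2.defined (φ s) (φ t) ∧ R2.natLe (φ (R1.mul s t)) (R2.mul (φ s) (φ t))) ∧
  (∀ s, φ (R1.plus s) = R2.plus (φ s)) ∧
  (∀ s, φ (R1.star s) = R2.star (φ s))

/-- An ordered functor between locally inductive categories. -/
def OrdFunctor {C : Type u} {D : Type u} (A : LInductiveCat C) (B : LInductiveCat D)
    (φ : C → D) : Prop :=
  (∀ x, φ (A.dom x) = B.dom (φ x)) ∧
  (∀ x, φ (A.cod x) = B.cod (φ x)) ∧
  (∀ x y, A.dom x = A.cod y → φ (A.comp x y) = B.comp (φ x) (φ y)) ∧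
  (∀ x y, A.le x y → B.le (φ x) (φ y))

/-- Composition of binary relations on `X`. -/
def rcomp {X : Type u} (R S : Set (X × X)) : Set (X × X) :=
  {p | ∃ z, (p.1, z) ∈ R ∧ (z, p.2) ∈ S}

/-- `R⁺ = {(x,x) : (x,y) ∈ R for some y}`. -/
def rplus {X : Type u} (R : Set (X × X)) : Set (X × X) :=
  {p | p.1 = p.2 ∧ ∃ y, (p.1, y) ∈ R}

/-- `R* = {(y,y) : (x,y) ∈ R for some x}`. -/
def rstar {X : Type u} (R : Set (X × X)) : Set (X × X) :=
  {p | p.1 = p.2 ∧ ∃ x, (x, p.2) ∈ R}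
theorem RestrictionSgpd.plus_mul {S : Type u} (R : RestrictionSgpd S) (s t : S)
    (h : R.defined s t) : R.plus (R.mul s t) = R.plus (R.mul s (R.plus t)) := by
  obtain ⟨hd, he⟩ := R.lr4 s t h
  obtain ⟨h1, h1e⟩ := R.lr1 s
  -- `(st)⁺s⁺` is defined since `(st)⁺(s⁺s) = (st)⁺s` is.
  have hdp : R.defined (R.plus (R.mul s t)) (R.plus s) :=
    (R.assoc₃ _ (R.plus s) s h1 (by rwa [h1e])).1
  obtain ⟨hdp', hcomm⟩ := R.lr2 _ _ hdp
  have hst : R.mul (R.plus s) (R.mul s t) = R.mul s t := by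
    rw [← (R.assoc₁ _ _ _ h1 h).2.2, h1e]
  rw [he, ← R.lr3 _ _ hdp, hcomm, R.lr3 _ _ hdp', hst]

theorem RestrictionSgpd.star_mul {S : Type u} (R : RestrictionSgpd S) (s t : S)
    (h : R.defined s t) : R.star (R.mul s t) = R.star (R.mul (R.star s) t) := by
  obtain ⟨hd, he⟩ := R.rr4 s t h
  obtain ⟨h1, h1e⟩ := R.rr1 t
  -- `t*(st)*` is defined since `(tt*)(st)* = t(st)*` is.
  have hdp : R.defined (R.star t) (R.star (R.mul s t)) :=
    (R.assoc₂ t _ _ h1 (by rwa [h1e])).1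
  obtain ⟨hdp', hcomm⟩ := R.rr2 _ _ hdp
  have hst : R.mul (R.mul s t) (R.star t) = R.mul s t := by
    rw [(R.assoc₁ _ _ _ h h1).2.2, h1e]
  rw [he, ← R.rr3 _ _ hdp, hcomm, R.rr3 _ _ hdp', hst]

/-- Every two-sided restriction semigroupoid is a two-sided Ehresmann
semigroupoid, and on it the two partial orders coincide: `s⁺t` is defined with `s⁺t = s`
iff `ts*` is defined with `ts* = s`. -/
theorem stmt11 {S : Type u} (R : RestrictionSgpd S) :
    (∃ E : EhresmannSgpd S, E.toSemigroupoid = R.toSemigroupoid ∧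
      E.plus = R.plus ∧ E.star = R.star) ∧
    (∀ s t, (R.defined (R.plus s) t ∧ R.mul (R.plus s) t = s) ↔
      (R.defined t (R.star s) ∧ R.mul t (R.star s) = s)) := by
  refine ⟨⟨{ R with
    le1 := R.lr1, le2 := R.lr2, le3 := R.lr3, le4 := R.plus_mul
    re1 := R.rr1, re2 := R.rr2, re3 := R.rr3, re4 := R.star_mul }, rfl, rfl, rfl⟩,
    fun s t => ⟨?_, ?_⟩⟩
  · rintro ⟨hd, he⟩
    have h := R.rr4 _ _ hd
    rw [he, R.plus_star, he] at h
    exact ⟨h.1, h.2.symm⟩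
  · rintro ⟨hd, he⟩
    have h := R.lr4 _ _ hd
    rw [he, R.star_plus, he] at h
    exact ⟨h.1, h.2.symm⟩
end

section
/- Let C be a small category and ≤ a partial order on C. Then (C, ≤) is a locally inductive category if and only if the triple (C, ≤, ≤), with both partial orders equal to ≤, is a local biordered Ehresmann category. -/
/-!
When the two orders of a local biordered Ehresmann category coincide, its axioms contain those of
a locally inductive category, so only the forward direction has content: the axioms tying the two
orders together must hold automatically. Commutation of `≤_l` and `≤_r` is trivial, since both
composites are `≤ ∘ ≤`. For the compatibility of restriction with the order, let `x ≤ y`, and put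
`f = D(x) ∧ e`, `g = D(y) ∧ e`. As `D(x) ≤ D(y)`, associativity of the partial meet shows that `g`
is defined and `f ≤ g ≤ D(y)`. Now `x|f` and `(y|g)|f` both lie below `y` and have domain `f`, so
they are equal by uniqueness of restrictions, whence `x|f = (y|g)|f ≤ y|g`. The statement for
corestrictions is dual.
-/


universe u

namespace LInductiveCat

variable {C : Type u} (L : LInductiveCat C)

/-- Meets are monotone in the left argument; definedness of `b ∧ e` is part of the conclusion. -/
lemma meet_mono_left {a b e : C} (ha : a ∈ L.obj) (hb : b ∈ L.obj) (he : e ∈ L.obj)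
    (hab : L.le a b) (hae : L.mdef a e) :
    L.mdef b e ∧ L.le (L.meet a e) (L.meet b e) := by
  obtain ⟨hd, hm⟩ := (L.le_meet a b ha hb).1 hab
  obtain ⟨h1, h2, h3⟩ := L.meet_assoc₂ a b e ha hb he hd (by rwa [hm])
  rw [hm] at h3
  have hg := L.meet_mem b e hb he h1
  have hf := L.meet_mem a e ha he hae
  obtain ⟨k1, -, k3⟩ := L.meet_assoc₁ a _ _ ha hg hg h2 (L.mdef_self _ hg)
  rw [L.meet_self _ hg, ← h3] at k3
  rw [← h3] at k1
  exact ⟨h1, (L.le_meet _ _ hf hg).2 ⟨k1, k3⟩⟩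

lemma meet_le_left {a e : C} (ha : a ∈ L.obj) (he : e ∈ L.obj) (hae : L.mdef a e) :
    L.le (L.meet a e) a := by
  have hea := L.mdef_comm a e ha he hae
  obtain ⟨h4, -, h3⟩ := L.meet_assoc₁ e a a he ha ha hea (L.mdef_self a ha)
  rw [L.meet_self a ha, ← L.meet_comm a e ha he hae] at h3
  rw [← L.meet_comm a e ha he hae] at h4
  exact (L.le_meet _ _ (L.meet_mem a e ha he hae) ha).2 ⟨h4, h3⟩

lemma res_mono {x y f g : C} (hf : f ∈ L.obj) (hg : g ∈ L.obj) (hxy : L.le x y)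
    (hfx : L.le f (L.dom x)) (hfg : L.le f g) (hgy : L.le g (L.dom y)) :
    L.le (L.res x f) (L.res y g) := by
  have hfz : L.le f (L.dom (L.res y g)) := by rwa [L.dom_res y g hg hgy]
  have hfy := L.le_trans _ _ _ hfg hgy
  have h1 := L.res_unique y f (L.res x f) hf hfy
    (L.le_trans _ _ _ (L.res_le x f hf hfx) hxy) (L.dom_res x f hf hfx)
  have h2 := L.res_unique y f (L.res (L.res y g) f) hf hfy
    (L.le_trans _ _ _ (L.res_le _ f hf hfz) (L.res_le y g hg hgy)) (L.dom_res _ f hf hfz)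
  rw [h1, ← h2]
  exact L.res_le _ f hf hfz

lemma cores_mono {x y f g : C} (hf : f ∈ L.obj) (hg : g ∈ L.obj) (hxy : L.le x y)
    (hfx : L.le f (L.cod x)) (hfg : L.le f g) (hgy : L.le g (L.cod y)) :
    L.le (L.cores f x) (L.cores g y) := by
  have hfz : L.le f (L.cod (L.cores g y)) := by rwa [L.cod_cores g y hg hgy]
  have hfy := L.le_trans _ _ _ hfg hgy
  have h1 := L.cores_unique f y (L.cores f x) hf hfy
    (L.le_trans _ _ _ (L.cores_le f x hf hfx) hxy) (L.cod_cores f x hf hfx)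
  have h2 := L.cores_unique f y (L.cores f (L.cores g y)) hf hfy
    (L.le_trans _ _ _ (L.cores_le f _ hf hfz) (L.cores_le g y hg hgy)) (L.cod_cores f _ hf hfz)
  rw [h1, ← h2]
  exact L.cores_le f _ hf hfz

/-- Restricting along the meet with a fixed object preserves the order. -/
lemma res_meet_mono {x y e : C} (he : e ∈ L.obj) (hxy : L.le x y) (hd : L.mdef (L.dom x) e) :
    L.le (L.res x (L.meet (L.dom x) e)) (L.res y (L.meet (L.dom y) e)) := by
  have hx := L.dom_mem x
  have hy := L.dom_mem y
  obtain ⟨hd', hle⟩ := L.meet_mono_left hx hy he (L.le_dom x y hxy) hd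
  exact L.res_mono (L.meet_mem _ _ hx he hd) (L.meet_mem _ _ hy he hd') hxy
    (L.meet_le_left hx he hd) hle (L.meet_le_left hy he hd')

/-- Corestricting along the meet with a fixed object preserves the order. -/
lemma cores_meet_mono {x y e : C} (he : e ∈ L.obj) (hxy : L.le x y) (hd : L.mdef e (L.cod x)) :
    L.le (L.cores (L.meet e (L.cod x)) x) (L.cores (L.meet e (L.cod y)) y) := by
  have hx := L.cod_mem x
  have hy := L.cod_mem y
  have hc := L.mdef_comm _ _ he hx hd
  obtain ⟨hc', hle⟩ := L.meet_mono_left hx hy he (L.le_cod x y hxy) hc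
  rw [← L.meet_comm _ _ hx he hc, ← L.meet_comm _ _ hy he hc']
  exact L.cores_mono (L.meet_mem _ _ hx he hc) (L.meet_mem _ _ hy he hc') hxy
    (L.meet_le_left hx he hc) hle (L.meet_le_left hy he hc')

/-- A locally inductive category, viewed as a local biordered Ehresmann category whose two orders
are both the given one. -/
def toLBEC : LBEC C :=
  { L with
    lel := L.le
    ler := L.le
    lel_refl := L.le_refl
    lel_antisymm := L.le_antisymm
    lel_trans := L.le_trans
    ler_refl := L.le_refl
    ler_antisymm := L.le_antisymm
    ler_trans := L.le_trans
    lel_dom := L.le_dom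
    lel_cod := L.le_cod
    ler_dom := L.le_dom
    ler_cod := L.le_cod
    lel_comp := L.le_comp
    ler_comp := L.le_comp
    ec4l := L.le_meet
    ec4r := L.le_meet
    ec5 := fun _ _ => Iff.rfl
    ec6 := fun _ _ _ he hxy hd => L.res_meet_mono he hxy hd
    ec7 := fun _ _ _ he hxy hd => L.cores_meet_mono he hxy hd }

end LInductiveCat

/-- A local biordered Ehresmann category whose two orders coincide, viewed as a locally inductive
category. -/
def LBEC.toLInductiveCat {C : Type u} (E : LBEC C) (h : E.ler = E.lel) : LInductiveCat C :=
  { E with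
    le := E.lel
    le_refl := E.lel_refl
    le_antisymm := E.lel_antisymm
    le_trans := E.lel_trans
    le_dom := E.lel_dom
    le_cod := E.lel_cod
    le_comp := E.lel_comp
    res_le := h ▸ E.res_le
    dom_res := h ▸ E.dom_res
    res_unique := h ▸ E.res_unique
    le_meet := E.ec4l }

/-- `(C, ≤)` is a locally inductive category if and only if `(C, ≤, ≤)`,
with both partial orders equal to `≤`, is a local biordered Ehresmann category. -/
theorem stmt12 {C : Type u} (obj : Set C) (dom cod : C → C) (comp : C → C → C)
    (le : C → C → Prop) :
    (∃ L : LInductiveCat C, L.obj = obj ∧ L.dom = dom ∧ L.cod = cod ∧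
      L.comp = comp ∧ L.le = le) ↔
    (∃ E : LBEC C, E.obj = obj ∧ E.dom = dom ∧ E.cod = cod ∧ E.comp = comp ∧
      E.lel = le ∧ E.ler = le) := by
  constructor
  · rintro ⟨L, h1, h2, h3, h4, h5⟩
    exact ⟨L.toLBEC, h1, h2, h3, h4, h5, h5⟩
  · rintro ⟨E, h1, h2, h3, h4, h5, h6⟩
    exact ⟨E.toLInductiveCat (h6.trans h5.symm), h1, h2, h3, h4, h5⟩
end

section
/- Let (S,+,*) be a two-sided Ehresmann semigroupoid, and let C(S) be the associated local biordered Ehresmann category (with objects U, D(s) = s*, R(s) = s⁺, composition s·t = st whenever s* = t⁺, and orders s ≤_l t iff s⁺t = s, s ≤_r t iff ts* = s). Then (S,+,*) is a two-sided restriction semigroupoid if and only if ≤_l = ≤_r and (C(S), ≤_l) is a locally inductive category. -/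
/-!
The order-theoretic half of the locally inductive structure is automatic: for a two-sided
Ehresmann semigroupoid, the ample identities (lr4) and (rr4) hold if and only if `≤_l = ≤_r`.

* If (rr4) holds and `s = s⁺t`, then `s = (s⁺)*t = t(s⁺t)* = ts*`, so `s ≤_l t` implies
  `s ≤_r t` (`EhresmannSgpd.ler_of_lel`); the other inclusion is dual.
* Conversely, if `st` is defined then `st⁺ ≤_r s` always holds, because `(st⁺)* = s*t⁺`
  (`EhresmannSgpd.mul_plus_ler`). When `≤_r` is contained in `≤_l`, this reads
  `st⁺ = (st⁺)⁺s = (st)⁺s`, which is (lr4); (rr4) is dual.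

Once the two orders coincide, `C(S)` with restrictions `x|e = xe`, corestrictions `e|x = ex`
and meets `e ∧ f = ef` is a locally inductive category: statements about codomains and
corestrictions are proved with the `≤_l` form of the order, and those about domains and
restrictions with its `≤_r` form. The left-right symmetry is exploited through the opposite
semigroupoid `EhresmannSgpd.op`.
-/

universe u

namespace EhresmannSgpd

variable {S : Type u} (E : EhresmannSgpd S)

/-- The opposite of a two-sided Ehresmann semigroupoid: the product is reversed and the two
unary operations are exchanged. It turns `≤_l` into `≤_r` and vice versa. -/
def op : EhresmannSgpd S where
  defined s t := E.defined t s
  mul s t := E.mul t s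
  assoc₁ s t r h₁ h₂ := by
    obtain ⟨a, b, c⟩ := E.assoc₁ r t s h₂ h₁
    exact ⟨b, a, c.symm⟩
  assoc₂ s t r h₁ h₂ := by
    obtain ⟨a, b, c⟩ := E.assoc₃ r t s h₁ h₂
    exact ⟨a, b, c.symm⟩
  assoc₃ s t r h₁ h₂ := by
    obtain ⟨a, b, c⟩ := E.assoc₂ r t s h₁ h₂
    exact ⟨a, b, c.symm⟩
  plus := E.star
  star := E.plus
  le1 := E.re1
  le2 s t h := E.re2 t s h
  le3 s t h := E.re3 t s h
  le4 s t h := E.re4 t s h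
  re1 := E.le1
  re2 s t h := E.le2 t s h
  re3 s t h := E.le3 t s h
  re4 s t h := E.le4 t s h
  plus_star := E.star_plus
  star_plus := E.plus_star

lemma plus_plus (s : S) : E.plus (E.plus s) = E.plus s := by
  have h := E.star_plus (E.plus s)
  rwa [E.plus_star] at h

lemma plus_of_mem {e : S} (he : e ∈ E.projections) : E.plus e = e := by
  obtain ⟨s, rfl⟩ := he
  exact E.plus_plus s

lemma star_of_mem {e : S} (he : e ∈ E.projections) : E.star e = e := by
  obtain ⟨s, rfl⟩ := he
  exact E.plus_star s

lemma plus_mem (s : S) : E.plus s ∈ E.projections := ⟨s, rfl⟩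

lemma star_mem (s : S) : E.star s ∈ E.projections := ⟨E.star s, (E.star_plus s).symm⟩

lemma op_projections : E.op.projections = E.projections := by
  ext e
  constructor
  · rintro ⟨s, rfl⟩
    exact E.star_mem s
  · intro he
    exact ⟨e, (E.star_of_mem he).symm⟩

lemma defined_comm {e f : S} (he : e ∈ E.projections) (hf : f ∈ E.projections)
    (h : E.defined e f) : E.defined f e ∧ E.mul e f = E.mul f e := by
  rw [← E.plus_of_mem he, ← E.plus_of_mem hf] at h ⊢
  exact E.le2 e f h

lemma mul_mem {e f : S} (he : e ∈ E.projections) (hf : f ∈ E.projections)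
    (h : E.defined e f) : E.mul e f ∈ E.projections := by
  rw [← E.plus_of_mem he, ← E.plus_of_mem hf] at h ⊢
  exact ⟨_, E.le3 _ _ h⟩

lemma idem_of_mem {e : S} (he : e ∈ E.projections) : E.defined e e ∧ E.mul e e = e := by
  simpa only [E.plus_of_mem he] using E.le1 e

lemma defined_plus_iff {s t : S} : E.defined s (E.plus t) ↔ E.defined s t := by
  obtain ⟨h₁, h₂⟩ := E.le1 t
  constructor
  · intro h
    simpa only [h₂] using (E.assoc₁ s _ t h h₁).2.1
  · intro h
    exact (E.assoc₃ s _ t h₁ (by rwa [h₂])).1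

lemma star_defined_iff {s t : S} : E.defined (E.star s) t ↔ E.defined s t :=
  E.op.defined_plus_iff

lemma defined_of_eq {s t : S} (h : E.star s = E.plus t) : E.defined s t := by
  rw [← E.star_defined_iff, h]
  exact (E.le1 t).1

lemma plus_mul_of_eq {s t : S} (h : E.star s = E.plus t) :
    E.plus (E.mul s t) = E.plus s := by
  rw [E.le4 s t (E.defined_of_eq h), ← h, (E.re1 s).2]

lemma star_mul_of_eq {s t : S} (h : E.star s = E.plus t) :
    E.star (E.mul s t) = E.star t :=
  E.op.plus_mul_of_eq h.symm

lemma plus_mul_plus_of_lel {s t : S} (h : E.lel s t) :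
    E.defined (E.plus s) (E.plus t) ∧ E.mul (E.plus s) (E.plus t) = E.plus s := by
  have hd := E.defined_plus_iff.2 h.1
  exact ⟨hd, by rw [E.le3 s t hd, h.2]⟩

lemma lel_antisymm {s t : S} (h : E.lel s t) (h' : E.lel t s) : s = t := by
  obtain ⟨d, e⟩ := E.plus_mul_plus_of_lel h
  obtain ⟨_, e'⟩ := E.plus_mul_plus_of_lel h'
  have hst : E.plus s = E.plus t := by rw [← e, (E.le2 s t d).2, e']
  rw [← h.2, hst, (E.le1 t).2]

lemma lel_trans {s t r : S} (h : E.lel s t) (h' : E.lel t r) : E.lel s r := by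
  obtain ⟨d, e⟩ := E.plus_mul_plus_of_lel h
  obtain ⟨a, _, c⟩ := E.assoc₁ _ _ r d h'.1
  rw [e] at a c
  exact ⟨a, by rw [c, h'.2, h.2]⟩

lemma lel_plus {s t : S} (h : E.lel s t) : E.lel (E.plus s) (E.plus t) := by
  simpa only [lel, E.plus_plus] using E.plus_mul_plus_of_lel h

lemma ler_star {s t : S} (h : E.ler s t) : E.ler (E.star s) (E.star t) :=
  E.op.lel_plus h

/-- Composition in `C(S)` is monotone for `≤_l`, as `(xx')⁺ = x⁺` when `x* = x'⁺`. -/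
lemma lel_comp {x y x' y' : S} (h : E.lel x y) (h' : E.lel x' y')
    (e : E.star x = E.plus x') (e' : E.star y = E.plus y') :
    E.lel (E.mul x x') (E.mul y y') := by
  obtain ⟨_, b, c⟩ := E.assoc₁ _ _ _ h.1 (E.defined_of_eq e')
  have hd : E.defined x (E.plus x') := e ▸ (E.re1 x).1
  have hx : E.mul x (E.plus x') = x := e ▸ (E.re1 x).2
  -- `xy' = (xx'⁺)y' = x(x'⁺y') = xx'`
  have c' := (E.assoc₁ _ _ _ hd h'.1).2.2
  rw [hx, h'.2] at c'
  rw [h.2, c'] at c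
  exact ⟨by rwa [E.plus_mul_of_eq e], by rw [E.plus_mul_of_eq e, c]⟩

/-- The corestriction `e|x = ex` lies below `x` and has codomain `e`. -/
lemma cores_spec {e x : S} (he : e ∈ E.projections) (h : E.lel e (E.plus x)) :
    E.lel (E.mul e x) x ∧ E.plus (E.mul e x) = e := by
  obtain ⟨d, m⟩ := h
  rw [E.plus_of_mem he] at d m
  have hp : E.plus (E.mul e x) = e := by
    rw [E.le4 e x (E.defined_plus_iff.1 d), m, E.plus_of_mem he]
  exact ⟨⟨by rw [hp]; exact E.defined_plus_iff.1 d, by rw [hp]⟩, hp⟩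

/-- The restriction `x|e = xe` lies below `x` and has domain `e`. -/
lemma res_spec {e x : S} (he : e ∈ E.projections) (h : E.ler e (E.star x)) :
    E.ler (E.mul x e) x ∧ E.star (E.mul x e) = e :=
  E.op.cores_spec (e := e) (x := x) (E.op_projections ▸ he) h

/-- `st⁺ ≤_r s` holds in every two-sided Ehresmann semigroupoid, because `(st⁺)* = s*t⁺`. -/
lemma mul_plus_ler {s t : S} (h : E.defined s t) : E.ler (E.mul s (E.plus t)) s := by
  have d : E.defined s (E.plus t) := E.defined_plus_iff.2 h
  have d' : E.defined (E.star s) (E.plus t) := E.star_defined_iff.2 d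
  have hs : E.star (E.mul s (E.plus t)) = E.mul (E.star s) (E.plus t) := by
    rw [E.re4 _ _ d, E.star_of_mem (E.mul_mem (E.star_mem s) (E.plus_mem t) d')]
  obtain ⟨_, b, c⟩ := E.assoc₁ _ _ _ (E.re1 s).1 d'
  rw [(E.re1 s).2] at c
  exact ⟨by rwa [hs], by rw [hs, ← c]⟩

/-- (lr4) holds as soon as `≤_r` is contained in `≤_l`. -/
lemma lr4_of_ler_le (H : ∀ s t, E.ler s t → E.lel s t) (s t : S) (h : E.defined s t) :
    E.defined (E.plus (E.mul s t)) s ∧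
      E.mul s (E.plus t) = E.mul (E.plus (E.mul s t)) s := by
  obtain ⟨d, m⟩ := H _ _ (E.mul_plus_ler h)
  rw [← E.le4 s t h] at d m
  exact ⟨d, m.symm⟩

/-- (rr4) implies that `≤_l` is contained in `≤_r`. -/
lemma ler_of_lel
    (H : ∀ s t, E.defined s t →
      E.defined t (E.star (E.mul s t)) ∧ E.mul (E.star s) t = E.mul t (E.star (E.mul s t)))
    {s t : S} (h : E.lel s t) : E.ler s t := by
  obtain ⟨d, m⟩ := H _ _ h.1
  rw [h.2] at d m
  rw [E.plus_star, h.2] at m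
  exact ⟨d, m.symm⟩

/-- The ample identities (lr4) and (rr4) force the two orders to coincide. -/
lemma lel_eq_ler_of_restriction (R : RestrictionSgpd S)
    (hS : R.toSemigroupoid = E.toSemigroupoid) (hp : R.plus = E.plus) (hs : R.star = E.star) :
    E.lel = E.ler := by
  have hl := R.lr4
  have hr := R.rr4
  rw [hS, hp] at hl
  rw [hS, hs] at hr
  ext s t
  exact ⟨E.ler_of_lel hr, fun h => E.op.ler_of_lel (fun a b h => hl b a h) h⟩

/-- The restriction semigroupoid structure on `S` when `≤_l = ≤_r`. -/
def toRestrictionSgpd (H : E.lel = E.ler) : RestrictionSgpd S where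
  toSemigroupoid := E.toSemigroupoid
  plus := E.plus
  star := E.star
  lr1 := E.le1
  lr2 := E.le2
  lr3 := E.le3
  lr4 := E.lr4_of_ler_le fun _ _ h => H ▸ h
  rr1 := E.re1
  rr2 := E.re2
  rr3 := E.re3
  rr4 s t h := E.op.lr4_of_ler_le (fun a b (hab : E.lel a b) =>
    show E.ler a b from H ▸ hab) t s h
  plus_star := E.plus_star
  star_plus := E.star_plus

/-- The locally inductive category structure on `C(S)` when `≤_l = ≤_r`, with restrictions
`x|e = xe`, corestrictions `e|x = ex` and meets `e ∧ f = ef`. -/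
def toLInductiveCat (H : E.lel = E.ler) : LInductiveCat S where
  obj := E.projections
  dom := E.star
  cod := E.plus
  comp := E.mul
  dom_mem := E.star_mem
  cod_mem := E.plus_mem
  dom_comp _ _ h := E.star_mul_of_eq h
  cod_comp _ _ h := E.plus_mul_of_eq h
  comp_assoc x y z h h' := (E.assoc₁ x y z (E.defined_of_eq h) (E.defined_of_eq h')).2.2
  dom_obj _ he := E.star_of_mem he
  cod_obj _ he := E.plus_of_mem he
  comp_id x _ _ h := h ▸ (E.re1 x).2
  id_comp y _ _ h := h ▸ (E.le1 y).2
  le := E.lel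
  le_refl := E.le1
  le_antisymm _ _ h h' := E.lel_antisymm h h'
  le_trans _ _ _ h h' := E.lel_trans h h'
  le_dom x y h := by
    rw [H] at h ⊢
    exact E.ler_star h
  le_cod _ _ h := E.lel_plus h
  le_comp _ _ _ _ h h' e e' := E.lel_comp h h' e e'
  res x e := E.mul x e
  res_le x e he h := by
    rw [H] at h ⊢
    exact (E.res_spec he h).1
  dom_res x e he h := by
    rw [H] at h
    exact (E.res_spec he h).2
  res_unique x e y _ _ h hy := by
    rw [H] at h
    rw [← hy]
    exact h.2.symm
  cores e x := E.mul e x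
  cores_le _ _ he h := (E.cores_spec he h).1
  cod_cores _ _ he h := (E.cores_spec he h).2
  cores_unique e x y _ _ h hy := by
    rw [← hy]
    exact h.2.symm
  mdef := E.defined
  meet := E.mul
  meet_mem _ _ he hf h := E.mul_mem he hf h
  mdef_self _ he := (E.idem_of_mem he).1
  meet_self _ he := (E.idem_of_mem he).2
  mdef_comm _ _ he hf h := (E.defined_comm he hf h).1
  meet_comm _ _ he hf h := (E.defined_comm he hf h).2
  meet_assoc₁ e f g _ _ _ := E.assoc₁ e f g
  meet_assoc₂ e f g _ _ _ := E.assoc₂ e f g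
  meet_assoc₃ e f g _ _ _ := E.assoc₃ e f g
  le_meet e f he _ := by rw [lel, E.plus_of_mem he]

end EhresmannSgpd

/-- A two-sided Ehresmann semigroupoid `(S,+,*)` is a two-sided restriction
semigroupoid if and only if `≤_l = ≤_r` and the associated category `C(S)` (with the common
order `≤_l`) is a locally inductive category. -/
theorem stmt14 {S : Type u} (E : EhresmannSgpd S) :
    (∃ R : RestrictionSgpd S, R.toSemigroupoid = E.toSemigroupoid ∧
      R.plus = E.plus ∧ R.star = E.star) ↔
    (E.lel = E.ler ∧
      ∃ L : LInductiveCat S,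
        L.obj = E.projections ∧ L.dom = E.star ∧ L.cod = E.plus ∧
        (∀ s t, E.star s = E.plus t → L.comp s t = E.mul s t) ∧
        L.le = E.lel ∧
        (∀ e f, e ∈ E.projections → f ∈ E.projections →
          (L.mdef e f ↔ E.defined e f) ∧
          (E.defined e f → L.meet e f = E.mul e f))) := by
  constructor
  · rintro ⟨R, hS, hp, hs⟩
    have H := E.lel_eq_ler_of_restriction R hS hp hs
    exact ⟨H, E.toLInductiveCat H, rfl, rfl, rfl, fun _ _ _ => rfl, rfl,
      fun _ _ _ _ => ⟨Iff.rfl, fun _ => rfl⟩⟩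
  · rintro ⟨H, -⟩
    exact ⟨E.toRestrictionSgpd H, rfl, rfl, rfl⟩
end

section
/- Let (S,+,*) be a two-sided restriction semigroupoid and let C(S) be the associated locally inductive category. Then S is an inverse semigroupoid (with s⁺ = ss⁻¹ and s* = s⁻¹s) if and only if C(S) is a locally inductive groupoid; in particular, C(S) is a groupoid if and only if S is an inverse semigroupoid, and any locally inductive category which is a groupoid is automatically a locally inductive groupoid (i.e., inversion is order-preserving). -/
/-!
An inverse of `s` in the category `C(S)` is an element `y` with `y* = s⁺`, `y⁺ = s*`, `sy = s⁺`
and `ys = s*` (`isInv_iff`). Such a `y` is always a pseudo-inverse of `s`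
(`RestrictionSgpd.CatInv.pInv`), so uniqueness of pseudo-inverses gives uniqueness of inverses
in `C(S)`, and the pseudo-inverse in an inverse semigroupoid is an inverse in `C(S)` because
`(s⁻¹)⁻¹ = s`.

Conversely, let every element have an inverse in `C(S)`. The key point is that idempotents are
then projections (`star_eq_of_idem`): if `ee = e` and `fe = e*`, then `e*e = fee = fe = e*`,
whereas `(rr4)` gives `e*e = e(ee)* = ee* = e`. For any pseudo-inverse `t` of `s`, the idempotents
`st` and `ts` are therefore projections, and commutation of projections forces `st = s⁺` and
`ts = s*`; hence `t = s*t = yst = ys⁺ = y` (`pInv_eq_catInv`).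

Order preservation of inverses (`invOrdPres`) holds in any locally inductive
category: if `x ≤ y`, the restriction `z` of `y⁻¹` to `R(x)` satisfies `zx ≤ y⁻¹y = D(y)`, so
`zx = D(x)` by uniqueness of restrictions, and `x⁻¹ = z ≤ y⁻¹`.
-/

universe u

/-! ### Inverses in `C(S)` and pseudo-inverses in `S` -/

namespace RestrictionSgpd

variable {S : Type u} (R : RestrictionSgpd S)

/-- `y` is an inverse of `s` in the category `C(S)`, expressed in the operations of `S`. -/
def CatInv (s y : S) : Prop :=
  R.star y = R.plus s ∧ R.plus y = R.star s ∧ R.mul s y = R.plus s ∧ R.mul y s = R.star s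

/-- Composable pairs of `C(S)` have a defined product in `S`, since `st = (s s*) t` with
`s* = t⁺`. -/
theorem defined_of_star_eq_plus {s t : S} (h : R.star s = R.plus t) : R.defined s t := by
  have h1 := R.rr1 s
  rw [h] at h1
  have h2 := (R.assoc₁ s (R.plus t) t h1.1 (R.lr1 t).1).1
  rwa [h1.2] at h2

variable {R}

theorem CatInv.pInv {s y : S} (h : R.CatInv s y) : R.toSemigroupoid.PInv s y := by
  obtain ⟨h1, h2, h3, h4⟩ := h
  refine ⟨R.defined_of_star_eq_plus h2.symm, R.defined_of_star_eq_plus h1, ?_, ?_⟩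
  · rw [h3, (R.lr1 s).2]
  · rw [h4, ← h2, (R.lr1 y).2]

theorem pInv_symm {s t : S} (h : R.toSemigroupoid.PInv s t) : R.toSemigroupoid.PInv t s :=
  ⟨h.2.1, h.1, h.2.2.2, h.2.2.1⟩

theorem pInv_idem {s t : S} (h : R.toSemigroupoid.PInv s t) :
    R.defined (R.mul s t) (R.mul s t) ∧ R.mul (R.mul s t) (R.mul s t) = R.mul s t := by
  obtain ⟨hst, hts, h3, -⟩ := h
  obtain ⟨d1, -, -⟩ := R.assoc₁ s t s hst hts
  obtain ⟨-, d3, e2⟩ := R.assoc₁ (R.mul s t) s t d1 hst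
  exact ⟨d3, by rw [← e2, h3]⟩

/-- An idempotent that has an inverse in `C(S)` is a projection. -/
theorem star_eq_of_idem {e f : S} (hf : R.CatInv e f) (hd : R.defined e e)
    (he : R.mul e e = e) : R.star e = e := by
  have h1 := (R.assoc₁ f e e hf.pInv.2.1 hd).2.2
  rw [he, hf.2.2.2] at h1
  have h2 := (R.rr4 e e hd).2
  rw [he, (R.rr1 e).2] at h2
  exact h1.symm.trans h2

/-- The only pseudo-inverse of `s` whose two products with `s` are projections is the inverse of
`s` in `C(S)`. -/
theorem eq_catInv_of_star_eq {s t y : S} (hy : R.CatInv s y) (h : R.toSemigroupoid.PInv s t)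
    (hp : R.star (R.mul s t) = R.mul s t) (hq : R.star (R.mul t s) = R.mul t s) : t = y := by
  obtain ⟨hst, hts, h3, h4⟩ := h
  have hp' : R.plus (R.mul s t) = R.mul s t := by
    rw [← hp, R.star_plus]
  obtain ⟨d1, d2, e1⟩ := R.assoc₁ s t s hst hts
  -- Both `(st)s⁺ = ((st)s)⁺ = s⁺` and `s⁺(st) = (s⁺s)t = st` hold, so `st = s⁺`.
  have p1 : R.mul s t = R.plus s := by
    obtain ⟨-, da, ea⟩ := R.assoc₁ (R.plus s) s t (R.lr1 s).1 hst
    rw [(R.lr1 s).2] at ea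
    rw [← hp'] at da
    obtain ⟨db, eb⟩ := R.lr2 s (R.mul s t) da
    have ec := R.lr3 (R.mul s t) s db
    rw [hp', h3] at ec
    rw [hp'] at eb
    rw [ea, eb, ec]
  -- Dually, `s*(ts) = (s(ts))* = s*` and `(ts)s* = t(ss*) = ts`, so `ts = s*`.
  have q1 : R.mul t s = R.star s := by
    obtain ⟨da, -, ea⟩ := R.assoc₁ t s (R.star s) hts (R.rr1 s).1
    rw [(R.rr1 s).2] at ea
    rw [← hq] at da
    obtain ⟨db, eb⟩ := R.rr2 (R.mul t s) s da
    have ec := R.rr3 s (R.mul t s) db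
    rw [hq, ← e1, h3] at ec
    rw [hq] at eb
    rw [← ea, eb, ec]
  have e2 := (R.assoc₁ y s t hy.pInv.2.1 hst).2.2
  rw [hy.2.2.2, p1, ← hy.1, (R.rr1 y).2, ← q1, h4] at e2
  exact e2

/-- If every element has an inverse in `C(S)`, then every pseudo-inverse in `S` is an inverse in
`C(S)`. -/
theorem pInv_eq_catInv (hR : ∀ s, ∃ y, R.CatInv s y) {s t y : S} (hy : R.CatInv s y)
    (h : R.toSemigroupoid.PInv s t) : t = y := by
  obtain ⟨f, hf⟩ := hR (R.mul s t)
  obtain ⟨g, hg⟩ := hR (R.mul t s)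
  have i1 := pInv_idem h
  have i2 := pInv_idem (pInv_symm h)
  exact eq_catInv_of_star_eq hy h (star_eq_of_idem hf i1.1 i1.2) (star_eq_of_idem hg i2.1 i2.2)

theorem isInverse_iff : R.IsInverse ↔ ∀ s, ∃! y, R.CatInv s y := by
  constructor
  · rintro ⟨inv, h1, h2, h3⟩ s
    have hinv : inv (inv s) = s := (h2 _ _ (pInv_symm (h1 s))).symm
    have h4 := h3 (inv s)
    rw [hinv] at h4
    refine ⟨inv s, ⟨h4.2.trans (h3 s).1.symm, h4.1.trans (h3 s).2.symm, (h3 s).1.symm,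
      (h3 s).2.symm⟩, fun y hy => h2 s y hy.pInv⟩
  · intro h
    choose inv hinv _ using h
    exact ⟨inv, fun s => (hinv s).pInv,
      fun s t ht => pInv_eq_catInv (fun s => ⟨inv s, hinv s⟩) (hinv s) ht,
      fun s => ⟨(hinv s).2.2.1.symm, (hinv s).2.2.2.symm⟩⟩

end RestrictionSgpd

theorem isInv_iff {S : Type u} {R : RestrictionSgpd S} {L : LInductiveCat S}
    (h : IsCofSRes R L) (s y : S) : L.IsInv s y ↔ R.CatInv s y := by
  obtain ⟨-, hd, hc, hm, -, -⟩ := h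
  unfold LInductiveCat.IsInv RestrictionSgpd.CatInv
  rw [hd, hc]
  constructor
  · rintro ⟨h1, h2, h3, h4⟩
    exact ⟨h1, h2, by rw [← hm s y h2.symm, h3], by rw [← hm y s h1, h4]⟩
  · rintro ⟨h1, h2, h3, h4⟩
    exact ⟨h1, h2, by rw [hm s y h2.symm, h3], by rw [hm y s h1, h4]⟩

theorem isGroupoid_iff {S : Type u} {R : RestrictionSgpd S} {L : LInductiveCat S}
    (h : IsCofSRes R L) : L.IsGroupoid ↔ R.IsInverse := by
  rw [RestrictionSgpd.isInverse_iff]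
  simp only [LInductiveCat.IsGroupoid, isInv_iff h]

/-! ### Inversion preserves the order -/

theorem invOrdPres {C : Type u} (L : LInductiveCat C) : L.InvOrdPres := by
  rintro x y x' y' ⟨-, hx2, hx3, -⟩ ⟨hy1, -, -, hy4⟩ hxy
  have hle : L.le (L.cod x) (L.dom y') := by
    rw [hy1]; exact L.le_cod x y hxy
  have hzd := L.dom_res y' (L.cod x) (L.cod_mem x) hle
  have hzl := L.res_le y' (L.cod x) (L.cod_mem x) hle
  generalize L.res y' (L.cod x) = z at hzd hzl
  have hzx : L.le (L.comp z x) (L.dom y) := by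
    rw [← hy4]; exact L.le_comp z y' x y hzl hxy hzd hy1
  have hdom := L.le_dom x y hxy
  have hle' : L.le (L.dom x) (L.dom (L.dom y)) := by
    rwa [L.dom_obj _ (L.dom_mem y)]
  -- `zx` and `D(x)` are both restrictions of the identity `D(y)` to `D(x)`.
  have hzx' : L.comp z x = L.dom x :=
    (L.res_unique (L.dom y) (L.dom x) _ (L.dom_mem x) hle' hzx (L.dom_comp z x hzd)).trans
      (L.res_unique (L.dom y) (L.dom x) _ (L.dom_mem x) hle' hdom
        (L.dom_obj _ (L.dom_mem x))).symm
  have ha := L.comp_assoc z x x' hzd hx2.symm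
  rw [hzx', hx3, L.id_comp x' _ (L.dom_mem x) hx2, L.comp_id z _ (L.cod_mem x) hzd] at ha
  rw [ha]
  exact hzl

/-! ### The equivalences -/

/-- For a two-sided restriction semigroupoid `S` with associated locally
inductive category `C(S)`: `S` is an inverse semigroupoid (with `s⁺ = ss⁻¹`, `s* = s⁻¹s`)
iff `C(S)` is a locally inductive groupoid (a groupoid whose inversion is order-preserving);
in particular `C(S)` is a groupoid iff `S` is an inverse semigroupoid; and any locally
inductive category which is a groupoid automatically has order-preserving inversion. -/
theorem stmt15 :
    (∀ (S : Type u) (R : RestrictionSgpd S) (L : LInductiveCat S), IsCofSRes R L →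
      (R.IsInverse ↔ (L.IsGroupoid ∧ L.InvOrdPres)) ∧
      (L.IsGroupoid ↔ R.IsInverse)) ∧
    (∀ (D : Type u) (L' : LInductiveCat D), L'.IsGroupoid → L'.InvOrdPres) := by
  refine ⟨fun S R L h => ⟨?_, isGroupoid_iff h⟩, fun D L' _ => invOrdPres L'⟩
  rw [← isGroupoid_iff h]
  exact ⟨fun hg => ⟨hg, invOrdPres L⟩, And.left⟩
end

section
/- Let (S,+,*) be a two-sided Ehresmann semigroupoid with set of projections U, and let C(S) be the associated local biordered Ehresmann category. The following are equivalent: (a) the operation of S is everywhere defined (S is an Ehresmann semigroup); (b) the operation of the local meet-semilattice U is everywhere defined (U is a meet-semilattice); (c) C(S) is a biordered Ehresmann category, i.e., a local biordered Ehresmann category whose object local meet-semilattice has everywhere-defined meet. -/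
universe u

/-- Definedness of `s ⋆ t` is controlled by the projections: since `s = s ⋆ s*` and `t = t⁺ ⋆ t`,
definedness of `s* ⋆ t⁺` propagates outward through associativity to `s ⋆ t`. -/
theorem EhresmannSgpd.defined_of_star_plus {S : Type u} (E : EhresmannSgpd S) {s t : S}
    (h : E.defined (E.star s) (E.plus t)) : E.defined s t := by
  have h₁ := (E.assoc₁ _ _ _ (E.re1 s).1 h).1
  rw [(E.re1 s).2] at h₁
  have h₂ := (E.assoc₁ _ _ _ h₁ (E.le1 t).1).2.1
  rwa [(E.le1 t).2] at h₂

/-- For a two-sided Ehresmann semigroupoid `S` with set of projections `U`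
and associated local biordered Ehresmann category `C(S)`, the following are equivalent:
(a) the operation of `S` is everywhere defined; (b) the operation of `U` is everywhere
defined; (c) the meet of the object local meet-semilattice of `C(S)` is everywhere defined. -/
theorem stmt16 {S : Type u} (E : EhresmannSgpd S) (Cat : LBEC S) (h : IsCofS E Cat) :
    ((∀ s t : S, E.defined s t) ↔
      (∀ e f, e ∈ E.projections → f ∈ E.projections → E.defined e f)) ∧
    ((∀ e f, e ∈ E.projections → f ∈ E.projections → E.defined e f) ↔
      (∀ e f, e ∈ Cat.obj → f ∈ Cat.obj → Cat.mdef e f)) := by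
  obtain ⟨hobj, -, -, -, -, -, hmeet⟩ := h
  refine ⟨⟨fun H e f _ _ => H e f, fun H s t => E.defined_of_star_plus ?_⟩, ?_⟩
  · exact H _ _ ⟨E.star s, (E.star_plus s).symm⟩ ⟨t, rfl⟩
  · rw [hobj]
    exact ⟨fun H e f he hf => (hmeet e f he hf).1.2 (H e f he hf),
      fun H e f he hf => (hmeet e f he hf).1.1 (H e f he hf)⟩
end
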